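/- In B4, the element (σ1^2*σ3*σ2)^3 is a nontrivial element of the center of B4. -/

import Mathlib

/-- Braid relations of the braid group `B₄` on generators `σ1 = of 0`, `σ2 = of 1`,
`σ3 = of 2`. -/
def B4rels : Set (FreeGroup (Fin 3)) :=
  {FreeGroup.of 0 * FreeGroup.of 1 * FreeGroup.of 0 *
      (FreeGroup.of 1 * FreeGroup.of 0 * FreeGroup.of 1)⁻¹,
   FreeGroup.of 1 * FreeGroup.of 2 * FreeGroup.of 1 *
      (FreeGroup.of 2 * FreeGroup.of 1 * FreeGroup.of 2)⁻¹,
   FreeGroup.of 0 * FreeGroup.of 2 * (FreeGroup.of 2 * FreeGroup.of 0)⁻¹}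

/-- The braid group on 4 strands, as a presented group. -/
abbrev B4 : Type := PresentedGroup B4rels

/-- In any group, the braid relations make `(a² c b)³` commute with `a`, `b`, `c`. -/
theorem braid_aux {G : Type*} [Group G] (a b c : G) (h1 : a * b * a = b * a * b)
    (h2 : b * c * b = c * b * c) (h3 : a * c = c * a) :
    Commute ((a ^ 2 * c * b) ^ 3) a ∧ Commute ((a ^ 2 * c * b) ^ 3) b ∧
      Commute ((a ^ 2 * c * b) ^ 3) c := by
  obtain ⟨d, hd⟩ : ∃ d, d = a * b * c := ⟨_, rfl⟩
  have hda : d * a = b * d := by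
    calc d * a = a * b * (c * a) := by rw [hd]; group
      _ = a * b * a * c := by rw [← h3]; group
      _ = b * d := by rw [h1, hd]; group
  have hdb : d * b = c * d := by
    calc d * b = a * (b * c * b) := by rw [hd]; group
      _ = (a * c) * b * c := by rw [h2]; group
      _ = c * d := by rw [h3, hd]; group
  have he : (a * d) ^ 3 = d ^ 4 := by
    calc (a * d) ^ 3 = a * (d * a) * (d * a) * d := by simp only [pow_succ, pow_zero, one_mul, mul_assoc]
      _ = a * b * (d * b) * d * d := by rw [hda]; simp only [mul_assoc]
      _ = a * b * c * d * d * d := by rw [hdb]; simp only [mul_assoc]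
      _ = d ^ 4 := by rw [← hd]; simp only [pow_succ, pow_zero, one_mul]
  have kd : Commute (d ^ 4) d := (Commute.refl d).pow_left 4
  have ke : Commute (d ^ 4) (a * d) := by
    rw [← he]; exact (Commute.refl _).pow_left 3
  have ka : Commute (d ^ 4) a := by
    have := ke.mul_right kd.inv_right
    simpa using this
  have kb : Commute (d ^ 4) b := by
    have := (kd.mul_right ka).mul_right kd.inv_right
    rw [hda] at this
    simpa using this
  have kc : Commute (d ^ 4) c := by
    have := (kd.mul_right kb).mul_right kd.inv_right
    rw [hdb] at this
    simpa using this
  have hx : a ^ 2 * c * b = c * (a * d) * c⁻¹ := by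
    calc a ^ 2 * c * b = a * (a * c) * b := by rw [pow_two]; simp only [mul_assoc]
      _ = a * (c * a) * b := by rw [h3]
      _ = (a * c) * a * b := by simp only [mul_assoc]
      _ = c * (a * d) * c⁻¹ := by rw [h3, hd]; group
  have hfin : (a ^ 2 * c * b) ^ 3 = d ^ 4 := by
    rw [hx, conj_pow, he, ← kc.eq, mul_inv_cancel_right]
  rw [hfin]
  exact ⟨ka, kb, kc⟩

/-- The degree map from `B₄` to the integers. -/
theorem B4_degree : ∃ f : B4 →* Multiplicative ℤ,
    ∀ i, f (PresentedGroup.of i) = Multiplicative.ofAdd 1 := by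
  have h : ∀ r ∈ B4rels,
      FreeGroup.lift (fun _ : Fin 3 => Multiplicative.ofAdd (1 : ℤ)) r = 1 := by
    intro r hr
    rcases hr with rfl | rfl | rfl <;> simp
  exact ⟨PresentedGroup.toGroup h, fun i => PresentedGroup.toGroup.of h⟩

/-- The element `(σ1² σ3 σ2)^3` is a nontrivial central element of `B₄`. -/
theorem stmt_18 :
    ((PresentedGroup.of 0 ^ 2 * PresentedGroup.of 2 * PresentedGroup.of 1 : B4) ^ 3) ∈
        Subgroup.center B4 ∧
      ((PresentedGroup.of 0 ^ 2 * PresentedGroup.of 2 * PresentedGroup.of 1 : B4) ^ 3) ≠ 1 := by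
  constructor
  · have r1 : (PresentedGroup.of 0 * PresentedGroup.of 1 * PresentedGroup.of 0 : B4) =
        PresentedGroup.of 1 * PresentedGroup.of 0 * PresentedGroup.of 1 :=
      mul_inv_eq_one.mp (PresentedGroup.one_of_mem (rels := B4rels) (Or.inl rfl))
    have r2 : (PresentedGroup.of 1 * PresentedGroup.of 2 * PresentedGroup.of 1 : B4) =
        PresentedGroup.of 2 * PresentedGroup.of 1 * PresentedGroup.of 2 :=
      mul_inv_eq_one.mp (PresentedGroup.one_of_mem (rels := B4rels) (Or.inr (Or.inl rfl)))
    have r3 : (PresentedGroup.of 0 * PresentedGroup.of 2 : B4) =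
        PresentedGroup.of 2 * PresentedGroup.of 0 :=
      mul_inv_eq_one.mp (PresentedGroup.one_of_mem (rels := B4rels) (Or.inr (Or.inr rfl)))
    obtain ⟨ka, kb, kc⟩ := braid_aux _ _ _ r1 r2 r3
    generalize ((PresentedGroup.of 0 ^ 2 * PresentedGroup.of 2 *
      PresentedGroup.of 1 : B4) ^ 3) = w at ka kb kc ⊢
    have hle : Subgroup.closure (Set.range (PresentedGroup.of (rels := B4rels))) ≤
        Subgroup.centralizer {w} := by
      rw [Subgroup.closure_le]
      rintro _ ⟨i, rfl⟩
      rw [SetLike.mem_coe, Subgroup.mem_centralizer_singleton_iff]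
      fin_cases i
      · exact ka.symm.eq
      · exact kb.symm.eq
      · exact kc.symm.eq
    rw [PresentedGroup.closure_range_of] at hle
    rw [Subgroup.mem_center_iff]
    intro g
    exact Subgroup.mem_centralizer_singleton_iff.mp (hle (Subgroup.mem_top g))
  · intro h
    obtain ⟨f, hf⟩ := B4_degree
    have := congrArg f h
    simp only [map_pow, map_mul, hf, map_one] at this
    revert this
    decide
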